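/- Let n be finite and let L_j, for j < n, be a compact separable LOTS. Assume that all the L_j are not scattered and that at most one of the L_j is second countable. Then Ldim(∏_{j<n} L_j) = n. -/

import Mathlib

open Set Topology

/-- A subset `S` of a topological space is *scattered* iff every nonempty subset `T ⊆ S`
has a point which is isolated in the subspace topology of `T`. -/
def IsScatteredSet {X : Type*} [TopologicalSpace X] (S : Set X) : Prop :=
  ∀ T ⊆ S, T.Nonempty → ∃ x ∈ T, ∃ U : Set X, IsOpen U ∧ U ∩ T = {x}

/-- `X` embeds into a product of `κ` many LOTSes. -/
def EmbedsInLOTSProd (X : Type) [TopologicalSpace X] (κ : Cardinal.{0}) : Prop :=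
  ∃ (ι : Type) (L : ι → Type) (lin : ∀ i, LinearOrder (L i))
    (top : ∀ i, TopologicalSpace (L i)),
    (∀ i, @OrderTopology (L i) (top i) (lin i).toPreorder) ∧ Cardinal.mk ι = κ ∧
      ∃ e : X → ∀ i, L i,
        @Topology.IsEmbedding X (∀ i, L i) _ (@Pi.topologicalSpace ι L top) e

/-- `Ldim₀ X` : the least `κ` such that `X` embeds into a product of `κ` LOTSes. -/
noncomputable def Ldim0 (X : Type) [TopologicalSpace X] : Cardinal.{0} :=
  sInf {κ : Cardinal.{0} | EmbedsInLOTSProd X κ}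

/-- `Ldim X`, the LOTS dimension of `X` : the least `κ` such that every point of `X` has a
neighborhood `U` with `Ldim₀ (closure U) ≤ κ`. -/
noncomputable def Ldim (X : Type) [TopologicalSpace X] : Cardinal.{0} :=
  sInf {κ : Cardinal.{0} | ∀ x : X, ∃ U ∈ nhds x, Ldim0 ↥(closure U) ≤ κ}

/-- `u` and `v` are not separated by any pair of `P`. -/
def Unsep {M : Type*} [LinearOrder M] (P : Set (M × M)) (u v : M) : Prop :=
  ∀ p ∈ P, ¬ (u ≤ p.1 ∧ p.2 ≤ v) ∧ ¬ (v ≤ p.1 ∧ p.2 ≤ u)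

theorem Unsep.symm {M : Type*} [LinearOrder M] {P : Set (M × M)} {u v : M}
    (h : Unsep P u v) : Unsep P v u := fun p hp => ⟨(h p hp).2, (h p hp).1⟩

theorem exists_pairs {X M : Type*} [TopologicalSpace X] [TopologicalSpace.SeparableSpace X]
    [LinearOrder M] [TopologicalSpace M] [OrderTopology M] {V : Set X} (hV : IsOpen V)
    {g : X → M} (hg : ContinuousOn g V) :
    ∃ P : Set (M × M), P.Countable ∧ (∀ p ∈ P, p.1 < p.2) ∧
      (∀ u ∈ g '' V, ∀ v ∈ g '' V, ∀ w ∈ g '' V, Unsep P u v → Unsep P v w → Unsep P u w) ∧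
      (∀ u ∈ g '' V, ∀ v ∈ g '' V, ∀ w ∈ g '' V, u < v → v < w → ¬ Unsep P u w) := by
  obtain ⟨D, hDc, hDd⟩ := TopologicalSpace.exists_countable_dense X
  set C := g '' V with hC
  set E := g '' (D ∩ V) with hE
  have hEc : E.Countable := (hDc.mono inter_subset_left).image g
  have hEC : E ⊆ C := image_mono inter_subset_right
  have hd : ∀ u w, ∀ v ∈ C, u < v → v < w → ∃ d ∈ E, u < d ∧ d < w := by
    rintro u w _ ⟨x, hx, rfl⟩ h1 h2
    have ho : IsOpen (V ∩ g ⁻¹' (Ioo u w)) := hg.isOpen_inter_preimage hV isOpen_Ioo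
    obtain ⟨d, hd, hdD⟩ := hDd.inter_open_nonempty _ ho ⟨x, hx, h1, h2⟩
    exact ⟨g d, ⟨d, ⟨hdD, hd.1⟩, rfl⟩, hd.2.1, hd.2.2⟩
  let P1 : Set (M × M) := {p | p.1 < p.2 ∧ p.1 ∈ C ∧ p.2 ∈ E ∧ ∀ c ∈ C, ¬ (p.1 < c ∧ c < p.2)}
  let P2 : Set (M × M) := {p | p.1 < p.2 ∧ p.1 ∈ E ∧ p.2 ∈ E}
  have hP1 : P1.Countable := by
    refine MapsTo.countable_of_injOn (f := Prod.snd) (t := E) (fun p hp => hp.2.2.1) ?_ hEc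
    rintro ⟨a, b⟩ hp ⟨a', b'⟩ hp' (h : b = b')
    subst h
    have h1 := hp.2.2.2 a' hp'.2.1
    have h2 := hp'.2.2.2 a hp.2.1
    have h3 := hp.1
    have h4 := hp'.1
    simp only at h1 h2 h3 h4
    rcases lt_trichotomy a a' with h | h | h
    · exact absurd ⟨h, h4⟩ h1
    · rw [h]
    · exact absurd ⟨h, h3⟩ h2
  have hP2 : P2.Countable := (hEc.prod hEc).mono fun p hp => Set.mem_prod.mpr ⟨hp.2.1, hp.2.2⟩
  have key : ∀ x ∈ C, ∀ y ∈ C, ∀ z ∈ C, x < y → y < z →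
      ∃ p ∈ P1 ∪ P2, (x ≤ p.1 ∧ p.2 ≤ y) ∨ (y ≤ p.1 ∧ p.2 ≤ z) := by
    have aux : ∀ x ∈ C, ∀ d ∈ E, x < d → ∃ p ∈ P1 ∪ P2, x ≤ p.1 ∧ p.2 ≤ d := by
      intro x hx d hdE hxd
      by_cases h : ∃ c ∈ C, x < c ∧ c < d
      · obtain ⟨c, hc, h1, h2⟩ := h
        obtain ⟨d', hd', h3, h4⟩ := hd _ _ c hc h1 h2
        exact ⟨(d', d), Or.inr ⟨h4, hd', hdE⟩, h3.le, le_rfl⟩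
      · exact ⟨(x, d), Or.inl ⟨hxd, hx, hdE, fun c hc hh => h ⟨c, hc, hh⟩⟩, le_rfl, le_rfl⟩
    intro x hx y hy z hz hxy hyz
    obtain ⟨d, hdE, h1, h2⟩ := hd _ _ y hy hxy hyz
    rcases le_or_gt d y with h | h
    · obtain ⟨p, hp, h3, h4⟩ := aux x hx d hdE h1
      exact ⟨p, hp, Or.inl ⟨h3, h4.trans h⟩⟩
    · obtain ⟨p, hp, h3, h4⟩ := aux y hy d hdE h
      exact ⟨p, hp, Or.inr ⟨h3, h4.trans h2.le⟩⟩
  have hsub : ∀ p ∈ P1 ∪ P2, p.1 < p.2 ∧ p.1 ∈ C ∧ p.2 ∈ C := by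
    rintro p (hp | hp)
    · exact ⟨hp.1, hp.2.1, hEC hp.2.2.1⟩
    · exact ⟨hp.1, hEC hp.2.1, hEC hp.2.2⟩
  have tr : ∀ u v w, v ∈ C → Unsep (P1 ∪ P2) u v → Unsep (P1 ∪ P2) v w →
      ∀ p ∈ P1 ∪ P2, ¬ (u ≤ p.1 ∧ p.2 ≤ w) := by
    rintro u v w hv huv hvw p hp ⟨h1, h2⟩
    obtain ⟨h3, h4, h5⟩ := hsub p hp
    rcases le_or_gt v p.1 with h | h
    · exact (hvw p hp).1 ⟨h, h2⟩
    rcases le_or_gt p.2 v with h' | h'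
    · exact (huv p hp).1 ⟨h1, h'⟩
    obtain ⟨p', hp', h6 | h6⟩ := key _ h4 v hv _ h5 h h'
    · exact (huv p' hp').1 ⟨h1.trans h6.1, h6.2⟩
    · exact (hvw p' hp').1 ⟨h6.1, h6.2.trans h2⟩
  refine ⟨P1 ∪ P2, hP1.union hP2, fun p hp => (hsub p hp).1, ?_, ?_⟩
  · intro u hu v hv w hw h1 h2 p hp
    exact ⟨tr u v w hv h1 h2 p hp, tr w v u hv h2.symm h1.symm p hp⟩
  · intro u hu v hv w hw h1 h2 h
    obtain ⟨p, hp, h6 | h6⟩ := key u hu v hv w hw h1 h2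
    · exact (h p hp).1 ⟨h6.1, h6.2.trans h2.le⟩
    · exact (h p hp).1 ⟨h1.le.trans h6.1, h6.2⟩

theorem finite_bad {J : Type*} [DecidableEq J] {L : J → Type*}
    [∀ j, LinearOrder (L j)] [∀ j, TopologicalSpace (L j)] [∀ j, OrderTopology (L j)]
    [∀ j, CompactSpace (L j)] (j : J) {A A' : Set (∀ j, L j)} (hA : IsClosed A)
    (hA' : IsClosed A') (hd : Disjoint A A') :
    {q : L j × L j | q.1 ⋖ q.2 ∧
      ∃ z, Function.update z j q.1 ∈ A ∧ Function.update z j q.2 ∈ A'}.Finite := by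
  by_contra hinf
  set T := {q : L j × L j | q.1 ⋖ q.2 ∧
      ∃ z, Function.update z j q.1 ∈ A ∧ Function.update z j q.2 ∈ A'} with hT
  have : Infinite T := (Set.not_finite.mp hinf).to_subtype
  have hz : ∀ q : T, ∃ z, Function.update z j q.1.1 ∈ A ∧ Function.update z j q.1.2 ∈ A' :=
    fun q => q.2.2
  choose z hz1 hz2 using hz
  have lim : ∀ {Y : Type _} [TopologicalSpace Y] [CompactSpace Y] (f : T → Y),
      ∃ y, Filter.Tendsto f (Filter.hyperfilter T : Filter T) (𝓝 y) := by
    intro Y _ _ f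
    obtain ⟨y, -, hy⟩ := isCompact_univ.ultrafilter_le_nhds' ((Filter.hyperfilter T).map f)
      Filter.univ_mem
    exact ⟨y, hy⟩
  obtain ⟨zl, hzl⟩ := isCompact_univ.ultrafilter_le_nhds' ((Filter.hyperfilter T).map z)
      Filter.univ_mem
  obtain ⟨a, ha⟩ := lim (fun q : T => q.1.1)
  obtain ⟨b, hb⟩ := lim (fun q : T => q.1.2)
  replace hzl : Filter.Tendsto z (Filter.hyperfilter T : Filter T) (𝓝 zl) := hzl.2
  have hab : a ≤ b := le_of_tendsto_of_tendsto' ha hb fun q => q.2.1.1.le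
  have hab' : a = b := by
    by_contra hne
    obtain ⟨u, hu, v, hv, huv⟩ := (lt_of_le_of_ne hab hne).exists_disjoint_Iio_Ioi
    have hmem : {q : T | q.1.1 < u ∧ v < q.1.2} ∈ (Filter.hyperfilter T : Filter T) :=
      (ha.eventually (Iio_mem_nhds hu)).and (hb.eventually (Ioi_mem_nhds hv))
    have hnt : {q : T | q.1.1 < u ∧ v < q.1.2}.Infinite := by
      intro hf
      exact Filter.notMem_hyperfilter_of_finite hf hmem
    obtain ⟨s, hs, t, ht, hst⟩ := hnt.nontrivial
    have h1 : ∀ s t : T, s.1.1 < u → v < s.1.2 → t.1.1 < u → v < t.1.2 → ¬ s.1.1 < t.1.1 := by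
      intro s t h1 h2 h3 h4 h5
      have := s.2.1.2 h5
      exact this (huv _ h3 _ h2)
    have h2 : s.1.1 = t.1.1 := le_antisymm (not_lt.mp (h1 t s ht.1 ht.2 hs.1 hs.2))
      (not_lt.mp (h1 s t hs.1 hs.2 ht.1 ht.2))
    have h3 : s.1.2 = t.1.2 := by
      have hs' := s.2.1
      rw [h2] at hs'
      exact hs'.unique_right t.2.1
    exact hst (Subtype.ext (Prod.ext h2 h3))
  subst hab'
  have m1 := hA.mem_of_tendsto (hzl.update j ha) (Filter.Eventually.of_forall hz1)
  have m2 := hA'.mem_of_tendsto (hzl.update j hb) (Filter.Eventually.of_forall hz2)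
  exact hd.le_bot ⟨m1, m2⟩

theorem secondCountable_of_countable_jumps {L : Type*} [LinearOrder L] [TopologicalSpace L]
    [OrderTopology L] [TopologicalSpace.SeparableSpace L]
    (h : {q : L × L | q.1 ⋖ q.2}.Countable) : SecondCountableTopology L := by
  obtain ⟨D, hDc, hDd⟩ := TopologicalSpace.exists_countable_dense L
  set S := {q : L × L | q.1 ⋖ q.2} with hS
  set s : Set L := D ∪ (Prod.fst '' S ∪ Prod.snd '' S) with hs
  have hsc : s.Countable := hDc.union ((h.image _).union (h.image _))
  have h1 : ∀ a b : L, a < b → ∃ d ∈ s, a ≤ d ∧ d < b := by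
    intro a b hab
    by_cases hc : a ⋖ b
    · exact ⟨a, Or.inr (Or.inl ⟨(a, b), hc, rfl⟩), le_rfl, hab⟩
    · obtain ⟨c, hc1, hc2⟩ := exists_lt_lt_of_not_covBy hab hc
      obtain ⟨d, hd, hdD⟩ := hDd.inter_open_nonempty (Ioo a b) isOpen_Ioo ⟨c, hc1, hc2⟩
      exact ⟨d, Or.inl hdD, hd.1.le, hd.2⟩
  have h2 : ∀ a b : L, a < b → ∃ d ∈ s, a < d ∧ d ≤ b := by
    intro a b hab
    by_cases hc : a ⋖ b
    · exact ⟨b, Or.inr (Or.inr ⟨(a, b), hc, rfl⟩), hab, le_rfl⟩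
    · obtain ⟨c, hc1, hc2⟩ := exists_lt_lt_of_not_covBy hab hc
      obtain ⟨d, hd, hdD⟩ := hDd.inter_open_nonempty (Ioo a b) isOpen_Ioo ⟨c, hc1, hc2⟩
      exact ⟨d, Or.inl hdD, hd.1, hd.2.le⟩
  refine ⟨⟨Ioi '' s ∪ Iio '' s, (hsc.image _).union (hsc.image _), ?_⟩⟩
  refine (OrderTopology.topology_eq_generate_intervals (α := L)).trans ?_
  refine le_antisymm (TopologicalSpace.generateFrom_anti ?_) (le_generateFrom ?_)
  · simp only [union_subset_iff, image_subset_iff]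
    exact ⟨fun a _ ↦ ⟨a, .inl rfl⟩, fun a _ ↦ ⟨a, .inr rfl⟩⟩
  · rintro _ ⟨a, rfl | rfl⟩
    · have : Ioi a = ⋃ d ∈ s ∩ Ici a, Ioi d := by
        ext x
        simp only [mem_Ioi, mem_iUnion, exists_prop]
        constructor
        · intro hx
          obtain ⟨d, hd, h3, h4⟩ := h1 a x hx
          exact ⟨d, ⟨hd, h3⟩, h4⟩
        · rintro ⟨d, ⟨_, h3⟩, h4⟩
          exact lt_of_le_of_lt h3 h4
      rw [this]
      let _ := TopologicalSpace.generateFrom (Ioi '' s ∪ Iio '' s)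
      exact isOpen_iUnion fun x ↦ isOpen_iUnion fun h ↦ .basic _ <| .inl <| mem_image_of_mem _ h.1
    · have : Iio a = ⋃ d ∈ s ∩ Iic a, Iio d := by
        ext x
        simp only [mem_Iio, mem_iUnion, exists_prop]
        constructor
        · intro hx
          obtain ⟨d, hd, h3, h4⟩ := h2 x a hx
          exact ⟨d, ⟨hd, h4⟩, h3⟩
        · rintro ⟨d, ⟨_, h3⟩, h4⟩
          exact lt_of_lt_of_le h4 h3
      rw [this]
      let _ := TopologicalSpace.generateFrom (Ioi '' s ∪ Iio '' s)
      exact isOpen_iUnion fun x ↦ isOpen_iUnion fun h ↦ .basic _ <| .inr <| mem_image_of_mem _ h.1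

theorem exists_jump_point {L : Type*} [LinearOrder L] [TopologicalSpace L]
    [OrderTopology L] [TopologicalSpace.SeparableSpace L] [CompactSpace L]
    (h : ¬ SecondCountableTopology L) :
    ∃ x : L, ∀ U ∈ 𝓝 x, ¬ {q : L × L | q.1 ⋖ q.2 ∧ q.1 ∈ U ∧ q.2 ∈ U}.Countable := by
  by_contra! hcon
  apply h
  apply secondCountable_of_countable_jumps
  have : {q : L × L | q.1 ⋖ q.2 ∧ q.1 ∈ (univ : Set L)}.Countable := by
    refine isCompact_univ.induction_on
      (p := fun s : Set L => {q : L × L | q.1 ⋖ q.2 ∧ q.1 ∈ s}.Countable) ?_ ?_ ?_ ?_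
    · simp
    · intro s t hst ht
      exact Set.Countable.mono (fun q hq => ⟨hq.1, hst hq.2⟩ :
        {q : L × L | q.1 ⋖ q.2 ∧ q.1 ∈ s} ⊆ {q : L × L | q.1 ⋖ q.2 ∧ q.1 ∈ t}) ht
    · intro s t hs ht
      refine (hs.union ht).mono ?_
      rintro q ⟨hq, h | h⟩
      · exact Or.inl ⟨hq, h⟩
      · exact Or.inr ⟨hq, h⟩
    · intro x _
      obtain ⟨U, hU, hc⟩ := hcon x
      refine ⟨ordConnectedComponent U x, mem_nhdsWithin_of_mem_nhds
        (ordConnectedComponent_mem_nhds.2 hU), ?_⟩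
      set W := ordConnectedComponent U x with hW
      have hWo : W.OrdConnected := inferInstance
      have hWU : W ⊆ U := ordConnectedComponent_subset
      have hsub : {q : L × L | q.1 ⋖ q.2 ∧ q.1 ∈ W ∧ q.2 ∉ W}.Subsingleton := by
        have key : ∀ q q' : L × L, q.1 ⋖ q.2 → q.1 ∈ W → q.2 ∉ W → q'.1 ∈ W → ¬ q.1 < q'.1 := by
          intro q q' h1 h2 h3 h4 h5
          exact h3 (hWo.out h2 h4 ⟨h1.1.le, not_lt.mp (h1.2 h5)⟩)
        rintro q ⟨h1, h2, h3⟩ q' ⟨h1', h2', h3'⟩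
        have e : q.1 = q'.1 := le_antisymm (not_lt.mp (key q' q h1' h2' h3' h2))
          (not_lt.mp (key q q' h1 h2 h3 h2'))
        refine Prod.ext e ?_
        rw [e] at h1
        exact h1.unique_right h1'
      refine (hc.union hsub.countable).mono ?_
      rintro q ⟨h1, h2⟩
      by_cases h3 : q.2 ∈ W
      · exact Or.inl ⟨h1, hWU h2, hWU h3⟩
      · exact Or.inr ⟨h1, h2, h3⟩
  exact Set.Countable.mono (fun q hq => ⟨hq, mem_univ _⟩ :
    {q : L × L | q.1 ⋖ q.2} ⊆ {q : L × L | q.1 ⋖ q.2 ∧ q.1 ∈ (univ : Set L)}) this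

theorem exists_infinite_point {L : Type*} [TopologicalSpace L] [T2Space L] [CompactSpace L]
    (h : ¬ IsScatteredSet (univ : Set L)) : ∃ x : L, ∀ U ∈ 𝓝 x, U.Infinite := by
  by_contra! hcon
  have hfin : (univ : Set L).Finite := by
    refine isCompact_univ.induction_on (p := Set.Finite) finite_empty ?_ ?_ ?_
    · intro s t hst ht
      exact ht.subset hst
    · intro s t hs ht
      exact hs.union ht
    · intro x _
      obtain ⟨U, hU, hf⟩ := hcon x
      exact ⟨U, mem_nhdsWithin_of_mem_nhds hU, by simpa using hf⟩
  apply h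
  rintro T - ⟨x, hx⟩
  refine ⟨x, hx, (T \ {x})ᶜ, (hfin.subset (subset_univ _)).isClosed.isOpen_compl, ?_⟩
  ext y
  simp only [mem_inter_iff, mem_compl_iff, mem_sdiff, mem_singleton_iff]
  constructor
  · rintro ⟨h1, h2⟩
    by_contra h3
    exact h1 ⟨h2, h3⟩
  · rintro rfl
    exact ⟨fun h => h.2 rfl, hx⟩

theorem core {J : Type*} [Fintype J] [DecidableEq J] {L : J → Type*}
    [∀ j, LinearOrder (L j)] [∀ j, TopologicalSpace (L j)] [∀ j, OrderTopology (L j)]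
    [∀ j, CompactSpace (L j)] [∀ j, TopologicalSpace.SeparableSpace (L j)]
    {V : Set (∀ j, L j)} (hV : IsOpen V) {B : ∀ j, Set (L j)} (hBc : ∀ j, IsClosed (B j))
    (hBV : Set.pi univ B ⊆ V) (j0 : J)
    (hB : ∀ j, j ≠ j0 → ¬ {q : L j × L j | q.1 ⋖ q.2 ∧ q.1 ∈ B j ∧ q.2 ∈ B j}.Countable)
    (hB0 : (B j0).Infinite)
    {ι : Type*} [Fintype ι] {M : ι → Type*}
    [∀ i, LinearOrder (M i)] [∀ i, TopologicalSpace (M i)] [∀ i, OrderTopology (M i)]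
    {g : (∀ j, L j) → ∀ i, M i} (hg : ∀ i, ContinuousOn (fun z => g z i) V) (hinj : InjOn g V) :
    Fintype.card J ≤ Fintype.card ι := by
  classical
  by_contra! hcard
  choose P hPc hPlt hPtr hP3 using fun i => exists_pairs hV (hg i)
  have hBcl : IsClosed (Set.pi univ B) := isClosed_set_pi fun j _ => hBc j
  -- choice of good jumps
  have good : ∀ j, ∃ q : L j × L j, j ≠ j0 → q.1 ⋖ q.2 ∧ q.1 ∈ B j ∧ q.2 ∈ B j ∧
      ∀ z, Function.update z j q.1 ∈ Set.pi univ B → Function.update z j q.2 ∈ Set.pi univ B →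
        ∀ i, Unsep (P i) (g (Function.update z j q.1) i) (g (Function.update z j q.2) i) := by
    intro j
    by_cases hj : j = j0
    · subst hj
      obtain ⟨y, -⟩ := hB0.nonempty
      exact ⟨(y, y), fun h => absurd rfl h⟩
    let Bad1 : ∀ i, M i × M i → Set (L j × L j) := fun i p => {q | q.1 ⋖ q.2 ∧
      ∃ z, Function.update z j q.1 ∈ Set.pi univ B ∩ (fun z => g z i) ⁻¹' (Iic p.1) ∧
        Function.update z j q.2 ∈ Set.pi univ B ∩ (fun z => g z i) ⁻¹' (Ici p.2)}
    let Bad2 : ∀ i, M i × M i → Set (L j × L j) := fun i p => {q | q.1 ⋖ q.2 ∧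
      ∃ z, Function.update z j q.1 ∈ Set.pi univ B ∩ (fun z => g z i) ⁻¹' (Ici p.2) ∧
        Function.update z j q.2 ∈ Set.pi univ B ∩ (fun z => g z i) ⁻¹' (Iic p.1)}
    have hcl1 : ∀ i (c : M i), IsClosed (Set.pi univ B ∩ (fun z => g z i) ⁻¹' (Iic c)) :=
      fun i c => ((hg i).mono hBV).preimage_isClosed_of_isClosed hBcl isClosed_Iic
    have hcl2 : ∀ i (c : M i), IsClosed (Set.pi univ B ∩ (fun z => g z i) ⁻¹' (Ici c)) :=
      fun i c => ((hg i).mono hBV).preimage_isClosed_of_isClosed hBcl isClosed_Ici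
    have hdis : ∀ i, ∀ p ∈ P i, Disjoint (Set.pi univ B ∩ (fun z => g z i) ⁻¹' (Iic p.1))
        (Set.pi univ B ∩ (fun z => g z i) ⁻¹' (Ici p.2)) := by
      intro i p hp
      rw [Set.disjoint_left]
      rintro z ⟨_, h1⟩ ⟨_, h2⟩
      exact absurd (hPlt i p hp) (not_lt.mpr (le_trans h2 h1))
    have hc : (⋃ i, ⋃ p ∈ P i, (Bad1 i p ∪ Bad2 i p)).Countable := by
      refine countable_iUnion fun i => (hPc i).biUnion fun p hp => ?_
      exact ((finite_bad j (hcl1 i _) (hcl2 i _) (hdis i p hp)).union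
        (finite_bad j (hcl2 i _) (hcl1 i _) (hdis i p hp).symm)).countable
    have hne : ∃ q ∈ {q : L j × L j | q.1 ⋖ q.2 ∧ q.1 ∈ B j ∧ q.2 ∈ B j},
        q ∉ ⋃ i, ⋃ p ∈ P i, (Bad1 i p ∪ Bad2 i p) := by
      by_contra! hcon
      exact hB j hj (hc.mono hcon)
    obtain ⟨q, ⟨hq1, hq2, hq3⟩, hq⟩ := hne
    refine ⟨q, fun _ => ⟨hq1, hq2, hq3, ?_⟩⟩
    intro z hz1 hz2 i p hp
    simp only [mem_iUnion, not_exists] at hq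
    have hq' := hq i p hp
    constructor
    · rintro ⟨h1, h2⟩
      exact hq' (Or.inl ⟨hq1, z, ⟨hz1, h1⟩, ⟨hz2, h2⟩⟩)
    · rintro ⟨h1, h2⟩
      exact hq' (Or.inr ⟨hq1, z, ⟨hz1, h2⟩, ⟨hz2, h1⟩⟩)
  choose q hq using good
  let p : Finset J → L j0 → ∀ j, L j := fun s y =>
    Function.update (fun j => if j ∈ s then (q j).2 else (q j).1) j0 y
  have hp0 : ∀ s y, p s y j0 = y := fun s y => by simp [p]
  have hpj : ∀ s y j, j ≠ j0 → p s y j = if j ∈ s then (q j).2 else (q j).1 :=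
    fun s y j hj => by simp [p, hj]
  have hpB : ∀ s, ∀ y ∈ B j0, p s y ∈ Set.pi univ B := by
    intro s y hy j _
    by_cases hj : j = j0
    · subst hj
      rw [hp0]; exact hy
    · rw [hpj s y j hj]
      split_ifs
      · exact (hq j hj).2.2.1
      · exact (hq j hj).2.1
  have hC : ∀ s, ∀ y ∈ B j0, ∀ i, g (p s y) i ∈ (fun z => g z i) '' V :=
    fun s y hy i => ⟨p s y, hBV (hpB s y hy), rfl⟩
  have hrefl : ∀ i u, Unsep (P i) u u := by
    intro i u pr hpr
    have := hPlt i pr hpr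
    exact ⟨fun h => absurd (h.2.trans h.1) (not_le.mpr this),
      fun h => absurd (h.2.trans h.1) (not_le.mpr this)⟩
  have hun0 : ∀ y ∈ B j0, ∀ i s, Unsep (P i) (g (p s y) i) (g (p ∅ y) i) := by
    intro y hy i s
    induction s using Finset.induction_on with
    | empty => exact hrefl i _
    | insert j s hjs ih =>
      by_cases hj : j = j0
      · have : p (insert j s) y = p s y := by
          funext k
          by_cases hk : k = j0
          · subst hk; rw [hp0, hp0]
          · rw [hpj _ _ _ hk, hpj _ _ _ hk]
            have : k ≠ j := fun h => hk (h.trans hj)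
            simp [this]
        rw [this]; exact ih
      · have e1 : Function.update (p s y) j (q j).1 = p s y := by
          rw [Function.update_eq_self_iff, hpj _ _ _ hj, if_neg hjs]
        have e2 : Function.update (p s y) j (q j).2 = p (insert j s) y := by
          funext k
          by_cases hk : k = j
          · subst hk
            rw [hpj _ _ _ hj]; simp
          · rw [Function.update_of_ne hk]
            by_cases hk0 : k = j0
            · subst hk0; rw [hp0, hp0]
            · rw [hpj _ _ _ hk0, hpj _ _ _ hk0]; simp [hk]
        have h3 := (hq j hj).2.2.2 (p s y)
        rw [e1, e2] at h3
        exact hPtr i _ (hC _ y hy i) _ (hC _ y hy i) _ (hC _ y hy i)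
          (h3 (hpB _ y hy) (hpB _ y hy) i).symm ih
  have hun : ∀ y ∈ B j0, ∀ i s t, Unsep (P i) (g (p s y) i) (g (p t y) i) := by
    intro y hy i s t
    exact hPtr i _ (hC _ y hy i) _ (hC _ y hy i) _ (hC _ y hy i)
      (hun0 y hy i s) (hun0 y hy i t).symm
  -- no three distinct pairwise unseparated points
  have three : ∀ i, ∀ u ∈ (fun z => g z i) '' V, ∀ v ∈ (fun z => g z i) '' V,
      ∀ w ∈ (fun z => g z i) '' V, Unsep (P i) u v → Unsep (P i) v w → Unsep (P i) u w →
      u ≠ v → w = u ∨ w = v := by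
    intro i u hu v hv w hw huv hvw huw hne
    by_contra! hcon
    obtain ⟨h1, h2⟩ := hcon
    rcases lt_or_gt_of_ne hne with h | h <;> rcases lt_or_gt_of_ne h1 with h' | h' <;>
      rcases lt_or_gt_of_ne h2 with h'' | h''
    · exact hP3 i w hw u hu v hv h' h hvw.symm
    · exact absurd (h.trans (h''.trans h')) (lt_irrefl _)
    · exact hP3 i u hu w hw v hv h' h'' huv
    · exact hP3 i u hu v hv w hw h h'' huw
    · exact hP3 i w hw v hv u hu h'' h huw.symm
    · exact hP3 i v hv w hw u hu h'' h' huv.symm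
    · exact absurd (h.trans (h'.trans h'')) (lt_irrefl _)
    · exact hP3 i v hv u hu w hw h h' hvw
  have pinj : ∀ y, ∀ s ⊆ Finset.univ.erase j0, ∀ t : Finset J, p s y = p t y → s ⊆ t := by
    intro y s hs t hst j hjs
    have hj : j ≠ j0 := Finset.ne_of_mem_erase (hs hjs)
    have := congrFun hst j
    rw [hpj _ _ _ hj, hpj _ _ _ hj, if_pos hjs] at this
    by_contra hjt
    rw [if_neg hjt] at this
    exact (hq j hj).1.1.ne' this
  -- each coordinate takes two values
  have two : ∀ y ∈ B j0, ∀ i, ∃ s t, g (p s y) i < g (p t y) i := by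
    intro y hy i0
    by_contra! hcon
    have hle := Finset.card_le_card_of_injOn (s := (Finset.univ.erase j0).powerset)
      (t := ((Finset.univ : Finset ι).erase i0).powerset)
      (fun s => (Finset.univ.erase i0).filter fun i => g (p s y) i = g (p ∅ y) i)
      (fun s _ => Finset.mem_coe.mpr (Finset.mem_powerset.mpr (Finset.filter_subset _ _))) (by
        intro s hs t ht hst
        have hs' : s ⊆ Finset.univ.erase j0 := Finset.mem_powerset.mp (Finset.mem_coe.mp hs)
        have ht' : t ⊆ Finset.univ.erase j0 := Finset.mem_powerset.mp (Finset.mem_coe.mp ht)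
        have hgeq : g (p s y) = g (p t y) := by
          funext i
          by_cases hi : i = i0
          · subst hi; exact le_antisymm (hcon t s) (hcon s t)
          have hiff : g (p s y) i = g (p ∅ y) i ↔ g (p t y) i = g (p ∅ y) i := by
            have := Finset.ext_iff.mp hst i
            simpa [hi] using this
          by_cases h : g (p s y) i = g (p ∅ y) i
          · rw [h, hiff.mp h]
          · have h' := fun e => h (hiff.mpr e)
            have := three i _ (hC s y hy i) _ (hC ∅ y hy i) _ (hC t y hy i)
              (hun y hy i _ _) (hun y hy i _ _) (hun y hy i _ _) h
            rcases this with h2 | h2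
            · exact h2.symm
            · exact absurd h2 h'
        have hpeq := hinj (hBV (hpB s y hy)) (hBV (hpB t y hy)) hgeq
        exact Finset.Subset.antisymm (pinj y s hs' t hpeq) (pinj y t ht' s hpeq.symm))
    rw [Finset.card_powerset, Finset.card_powerset, Finset.card_erase_of_mem (Finset.mem_univ _),
      Finset.card_erase_of_mem (Finset.mem_univ _), Finset.card_univ, Finset.card_univ] at hle
    have h1 := (Nat.pow_le_pow_iff_right (by norm_num : 1 < 2)).mp hle
    have h2 : 0 < Fintype.card ι := Fintype.card_pos_iff.mpr ⟨i0⟩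
    omega
  -- accumulation
  have : Infinite (B j0) := hB0.to_subtype
  obtain ⟨ys, hysB, hys⟩ := (hBc j0).isCompact.ultrafilter_le_nhds'
    ((Filter.hyperfilter (B j0)).map Subtype.val)
    (Filter.mem_map.mpr (Filter.univ_mem' fun y => y.2))
  replace hys : Filter.Tendsto (Subtype.val : B j0 → L j0)
    (Filter.hyperfilter (B j0) : Filter (B j0)) (𝓝 ys) := hys
  choose s t hst using two ys hysB
  choose a ha b hb hab using fun i => (hst i).exists_disjoint_Iio_Ioi
  have hlim : ∀ r i, Filter.Tendsto (fun y : B j0 => g (p r y) i)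
      (Filter.hyperfilter (B j0) : Filter (B j0)) (𝓝 (g (p r ys) i)) := by
    intro r i
    have h1 : Filter.Tendsto (fun y : B j0 => p r y)
        (Filter.hyperfilter (B j0) : Filter (B j0)) (𝓝 (p r ys)) :=
      tendsto_const_nhds.update j0 hys
    have h2 := (hg i).continuousAt (hV.mem_nhds (hBV (hpB r ys hysB)))
    exact h2.tendsto.comp h1
  have hA : ∀ᶠ y : B j0 in (Filter.hyperfilter (B j0) : Filter (B j0)),
      ∀ i, g (p (s i) y) i < a i ∧ b i < g (p (t i) y) i := by
    rw [Filter.eventually_all]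
    intro i
    exact ((hlim (s i) i).eventually (Iio_mem_nhds (ha i))).and
      ((hlim (t i) i).eventually (Ioi_mem_nhds (hb i)))
  set A : Set (B j0) := {y | ∀ i, g (p (s i) y) i < a i ∧ b i < g (p (t i) y) i} with hAdef
  have hAinf : A.Infinite := fun hf => Filter.notMem_hyperfilter_of_finite hf hA
  obtain ⟨y0, hy0⟩ := hAinf.nonempty
  apply hAinf
  have hfin : (Set.pi univ fun i => ({g (p (s i) y0) i, g (p (t i) y0) i} : Set (M i))).Finite :=
    Set.Finite.pi fun i => (Set.finite_singleton _).insert _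
  refine Set.Finite.of_finite_image (hfin.subset ?_) (f := fun y : B j0 => g (p ∅ y)) ?_
  · rintro _ ⟨y, hy, rfl⟩ i _
    have key : ∀ y y' : B j0, y ∈ A → y' ∈ A → ¬ g (p (s i) y) i < g (p (s i) y') i ∧
        ¬ g (p (t i) y) i < g (p (t i) y') i := by
      intro y y' hy hy'
      have c1 := hab i _ (hy' i).1 _ (hy i).2
      constructor
      · intro h
        exact hP3 i _ (hC (s i) y y.2 i) _ (hC (s i) y' y'.2 i) _ (hC (t i) y y.2 i) h c1
          (hun y y.2 i _ _)
      · intro h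
        exact hP3 i _ (hC (s i) y' y'.2 i) _ (hC (t i) y y.2 i) _ (hC (t i) y' y'.2 i) c1 h
          (hun y' y'.2 i _ _)
    have e1 : g (p (s i) y) i = g (p (s i) y0) i :=
      le_antisymm (not_lt.mp (key y0 y hy0 hy).1) (not_lt.mp (key y y0 hy hy0).1)
    have e2 : g (p (t i) y) i = g (p (t i) y0) i :=
      le_antisymm (not_lt.mp (key y0 y hy0 hy).2) (not_lt.mp (key y y0 hy hy0).2)
    have := three i _ (hC (s i) y y.2 i) _ (hC (t i) y y.2 i) _ (hC ∅ y y.2 i)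
      (hun y y.2 i _ _) (hun y y.2 i _ _) (hun y y.2 i _ _) (hab i _ (hy i).1 _ (hy i).2).ne
    rw [e1, e2] at this
    exact this
  · intro y _ y' _ h
    have := hinj (hBV (hpB ∅ y y.2)) (hBV (hpB ∅ y' y'.2)) h
    have h2 := congrFun this j0
    rw [hp0, hp0] at h2
    exact Subtype.ext h2

theorem embeds_closure (n : ℕ) (L : Fin n → Type)
    [∀ j, LinearOrder (L j)] [∀ j, TopologicalSpace (L j)] [∀ j, OrderTopology (L j)]
    (W : Set (∀ j, L j)) : EmbedsInLOTSProd W (n : Cardinal.{0}) :=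
  ⟨Fin n, L, inferInstance, inferInstance, inferInstance, by simp, Subtype.val,
    Topology.IsEmbedding.subtypeVal⟩

/-- If `L_j` (j < n) are compact separable non-scattered LOTSes with at most one of them
second countable, then `Ldim (∏_{j<n} L_j) = n`. -/
theorem stmt14 (n : ℕ) (L : Fin n → Type)
    [∀ j, LinearOrder (L j)] [∀ j, TopologicalSpace (L j)] [∀ j, OrderTopology (L j)]
    [∀ j, CompactSpace (L j)] [∀ j, TopologicalSpace.SeparableSpace (L j)]
    (hns : ∀ j, ¬ IsScatteredSet (Set.univ : Set (L j)))
    (hsc : ∀ j k, SecondCountableTopology (L j) → SecondCountableTopology (L k) → j = k) :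
    Ldim (∀ j, L j) = (n : Cardinal.{0}) := by
  have hle : ∀ x : (∀ j, L j), ∃ U ∈ nhds x, Ldim0 ↥(closure U) ≤ (n : Cardinal.{0}) :=
    fun x => ⟨univ, Filter.univ_mem, csInf_le' (embeds_closure n L _)⟩
  refine le_antisymm (csInf_le' hle) (le_csInf ⟨_, hle⟩ ?_)
  intro κ hκ
  rcases Nat.eq_zero_or_pos n with hn | hn
  · subst hn; simp
  obtain ⟨j0, hj0⟩ : ∃ j0, ∀ j, j ≠ j0 → ¬ SecondCountableTopology (L j) := by
    by_cases h : ∃ j, SecondCountableTopology (L j)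
    · obtain ⟨j0, h0⟩ := h
      exact ⟨j0, fun j hj hs => hj (hsc j j0 hs h0)⟩
    · exact ⟨⟨0, hn⟩, fun j _ hs => h ⟨j, hs⟩⟩
  have hx : ∀ j, ∃ x : L j, (j ≠ j0 → ∀ U ∈ 𝓝 x,
      ¬ {q : L j × L j | q.1 ⋖ q.2 ∧ q.1 ∈ U ∧ q.2 ∈ U}.Countable) ∧
      (j = j0 → ∀ U ∈ 𝓝 x, U.Infinite) := by
    intro j
    by_cases h : j = j0
    · obtain ⟨x, hx⟩ := exists_infinite_point (hns j)
      exact ⟨x, fun h' => absurd h h', fun _ => hx⟩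
    · obtain ⟨x, hx⟩ := exists_jump_point (hj0 j h)
      exact ⟨x, fun _ => hx, fun h' => absurd h' h⟩
  choose x hx1 hx2 using hx
  obtain ⟨U, hU, hUκ⟩ := hκ x
  have hmem : EmbedsInLOTSProd ↥(closure U) (Ldim0 ↥(closure U)) :=
    csInf_mem (s := {κ : Cardinal.{0} | EmbedsInLOTSProd ↥(closure U) κ}) ⟨_, embeds_closure n L _⟩
  refine le_trans ?_ hUκ
  obtain ⟨ι, M, lin, top, hord, hcard, e, he⟩ := hmem
  rw [← hcard]
  rcases finite_or_infinite ι with hι | hι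
  swap
  · exact (Cardinal.natCast_lt_aleph0).le.trans (Cardinal.aleph0_le_mk ι)
  have := Fintype.ofFinite ι
  rw [Cardinal.mk_fintype, Nat.cast_le]
  have hVU : interior U ⊆ closure U := interior_subset.trans subset_closure
  have hxV : x ∈ interior U := mem_interior_iff_mem_nhds.mpr hU
  have hB : ∃ B : ∀ j, Set (L j), (∀ j, B j ∈ 𝓝 (x j) ∧ IsClosed (B j)) ∧
      Set.pi univ B ⊆ interior U := by
    obtain ⟨t, ht, hts⟩ : ∃ t : ∀ j, Set (L j), (∀ j, t j ∈ 𝓝 (x j)) ∧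
        Set.pi univ t ⊆ interior U := by
      have h1 := isOpen_interior.mem_nhds hxV
      rw [nhds_pi, Filter.mem_pi'] at h1
      obtain ⟨I, t, ht, hts⟩ := h1
      exact ⟨t, ht, (Set.pi_mono' (fun _ _ => Subset.rfl) (subset_univ _)).trans hts⟩
    choose B hB1 hB2 hB3 using fun j => exists_mem_nhds_isClosed_subset (ht j)
    exact ⟨B, fun j => ⟨hB1 j, hB2 j⟩, (Set.pi_mono fun j _ => hB3 j).trans hts⟩
  obtain ⟨B, hB1, hB2⟩ := hB
  classical
  let g : (∀ j, L j) → ∀ i, M i := fun z =>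
    if h : z ∈ closure U then e ⟨z, h⟩ else e ⟨x, hVU hxV⟩
  have hgr : (closure U).domRestrict g = e := by
    funext z
    simp [g, Set.domRestrict]
  have hgc : ContinuousOn g (closure U) := by
    rw [continuousOn_iff_continuous_domRestrict, hgr]
    exact he.continuous
  have hgi : InjOn g (closure U) := by
    rw [Set.injOn_iff_injective, hgr]
    exact he.injective
  have := core (V := interior U) isOpen_interior (fun j => (hB1 j).2) hB2 j0
    (fun j hj => hx1 j hj _ (hB1 j).1) (hx2 j0 rfl _ (hB1 j0).1) (g := g)
    (fun i => (continuous_apply i).comp_continuousOn (hgc.mono hVU)) (hgi.mono hVU)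
  simpa using this
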